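/- Let V : ℤ → ℝ be p̃-periodic (p̃ ≥ 1) with Schrödinger operator H, let E ∈ ℝ satisfy (E : ℂ) ∉ σ(H), and let c ∈ ℝ. For integers m, h ≥ 1 let V̂_{m,h} be the (m+h)·p̃-periodic potential defined by V̂_{m,h}(n) = V(n) if n mod (m+h)·p̃ ∈ [0, m·p̃ − 1], and V̂_{m,h}(n) = V(n) − c if n mod (m+h)·p̃ ∈ [m·p̃, (m+h)·p̃ − 1]. Define ℓ(E,W) = limsup_{N→∞} (1/N)·log‖A_N(E,W)‖ for a potential W. Then there exists h ∈ {1,2} such that ℓ(E, V̂_{m,h}) → ℓ(E, V) as m → ∞. -/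

import Mathlib

open Filter Matrix

/-- The transfer matrix `A_N(E,V) = ∏_{n=1}^N [[E − V(N−n), −1],[1,0]]`,
with the `n = 1` factor leftmost. -/
noncomputable def transferMatrix (V : ℤ → ℝ) (E : ℝ) (N : ℕ) : Matrix (Fin 2) (Fin 2) ℝ :=
  (((List.range N).map
    (fun n => !![E - V ((N : ℤ) - ((n : ℤ) + 1)), -1; (1 : ℝ), 0])).prod)

/-- Operator norm (Euclidean, i.e. ℓ²→ℓ²) of a 2×2 real matrix. -/
noncomputable def opNorm (A : Matrix (Fin 2) (Fin 2) ℝ) : ℝ :=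
  ‖LinearMap.toContinuousLinearMap (Matrix.toEuclideanLin A)‖

/-- `H` is a Schrödinger operator on `ℓ²(ℤ,ℂ)` with potential `V`. -/
def IsSchrodingerOp (V : ℤ → ℝ)
    (H : lp (fun _ : ℤ => ℂ) 2 →L[ℂ] lp (fun _ : ℤ => ℂ) 2) : Prop :=
  ∀ ψ : lp (fun _ : ℤ => ℂ) 2, ∀ n : ℤ,
    H ψ n = ψ (n + 1) + ψ (n - 1) + (V n : ℂ) * ψ n

/-- `V` is `p`-periodic. -/
def IsPeriodic (V : ℤ → ℝ) (p : ℕ) : Prop :=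
  ∀ n : ℤ, V (n + (p : ℤ)) = V n

/-- `V` is limit-periodic: a uniform limit of periodic potentials. -/
def IsLimitPeriodic (V : ℤ → ℝ) : Prop :=
  ∃ (W : ℕ → ℤ → ℝ) (p : ℕ → ℕ),
    (∀ k, 1 ≤ p k ∧ IsPeriodic (W k) (p k)) ∧
    (∀ ε > (0 : ℝ), ∃ K : ℕ, ∀ k ≥ K, ∀ n : ℤ, |V n - W k n| ≤ ε)

/-- `(1/N)·log‖A_N(E,V)‖`. -/
noncomputable def logNormRate (V : ℤ → ℝ) (E : ℝ) (N : ℕ) : ℝ :=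
  (1 / (N : ℝ)) * Real.log (opNorm (transferMatrix V E N))

/-- Individual (upper) Lyapunov exponent `limsup_N (1/N) log‖A_N(E,V)‖`. -/
noncomputable def lyapExp (V : ℤ → ℝ) (E : ℝ) : ℝ :=
  Filter.limsup (fun N : ℕ => logNormRate V E N) Filter.atTop

/-- Bottom of the (real trace of the) spectrum of `H`. -/
noncomputable def specInf (H : lp (fun _ : ℤ => ℂ) 2 →L[ℂ] lp (fun _ : ℤ => ℂ) 2) : ℝ :=
  sInf {x : ℝ | (x : ℂ) ∈ spectrum ℂ H}


section Helpers

/-- One-step matrix. -/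
noncomputable def stepM (V : ℤ → ℝ) (E : ℝ) (n : ℤ) : Matrix (Fin 2) (Fin 2) ℝ :=
  !![E - V n, -1; (1 : ℝ), 0]

lemma tm_zero (V : ℤ → ℝ) (E : ℝ) : transferMatrix V E 0 = 1 := by
  simp [transferMatrix]

lemma tm_succ (V : ℤ → ℝ) (E : ℝ) (N : ℕ) :
    transferMatrix V E (N + 1) = stepM V E N * transferMatrix V E N := by
  unfold transferMatrix stepM
  simp only [bind_pure_comp, List.map_eq_map, List.map_map]
  rw [List.range_succ_eq_map, List.map_cons, List.prod_cons, List.map_map]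
  congr 1
  · simp [Function.comp]
  · congr 1
    apply List.map_congr_left
    intro a _
    simp only [Function.comp]
    have e : ((N + 1 : ℕ) : ℤ) - (((a.succ : ℕ) : ℤ) + 1) = (N : ℤ) - ((a : ℤ) + 1) := by
      push_cast; ring
    rw [e]

lemma tm_congr (V W : ℤ → ℝ) (E : ℝ) (N : ℕ) (h : ∀ n : ℕ, n < N → V n = W n) :
    transferMatrix V E N = transferMatrix W E N := by
  induction N with
  | zero => simp [tm_zero]
  | succ k ih =>
    rw [tm_succ, tm_succ, ih (fun n hn => h n (by omega)), stepM, stepM, h k (by omega)]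

lemma tm_add (V : ℤ → ℝ) (E : ℝ) (a b : ℕ) :
    transferMatrix V E (a + b) =
      transferMatrix (fun n => V (n + a)) E b * transferMatrix V E a := by
  induction b with
  | zero => simp [tm_zero]
  | succ k ih =>
    rw [← add_assoc, tm_succ, tm_succ, ih, Matrix.mul_assoc]
    simp [stepM, add_comm]

lemma per_mul {V : ℤ → ℝ} {p : ℕ} (h : IsPeriodic V p) (k : ℕ) (n : ℤ) :
    V (n + (k * p : ℕ)) = V n := by
  induction k with
  | zero => simp
  | succ k ih =>
    rw [← ih, ← h (n + (k * p : ℕ))]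
    congr 1; push_cast; ring

lemma tm_per {V : ℤ → ℝ} {p : ℕ} (h : IsPeriodic V p) (E : ℝ) (k r : ℕ) :
    transferMatrix V E (k * p + r) = transferMatrix V E r * transferMatrix V E p ^ k := by
  have h1 : ∀ k : ℕ, transferMatrix V E (k * p) = transferMatrix V E p ^ k := by
    intro k
    induction k with
    | zero => simp [tm_zero]
    | succ k ih =>
      rw [Nat.succ_mul, tm_add, ih, pow_succ']
      congr 1
      exact tm_congr _ _ _ _ (fun n _ => per_mul h k n)
  rw [tm_add, h1]
  congr 1
  exact tm_congr _ _ _ _ (fun n _ => per_mul h k n)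

lemma tm_det (V : ℤ → ℝ) (E : ℝ) (N : ℕ) : (transferMatrix V E N).det = 1 := by
  induction N with
  | zero => simp [tm_zero]
  | succ k ih => rw [tm_succ, Matrix.det_mul, ih]; simp [stepM, Matrix.det_fin_two]

lemma ch2 (T : Matrix (Fin 2) (Fin 2) ℝ) (hd : T.det = 1) : T * T = T.trace • T - 1 := by
  rw [Matrix.det_fin_two] at hd
  ext i j
  fin_cases i <;> fin_cases j <;>
    simp [Matrix.mul_apply, Fin.sum_univ_two, Matrix.trace_fin_two] <;> linarith

/-- Root outside the unit disc. -/
lemma exists_mu (t : ℝ) (ht : 2 < |t|) : ∃ μ : ℝ, 1 < |μ| ∧ μ + μ⁻¹ = t := by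
  wlog h : 0 < t with H
  · have ht0 : t < 0 := by
      rcases lt_trichotomy t 0 with h1 | h1 | h1
      · exact h1
      · subst h1; simp at ht; linarith
      · exact absurd h1 h
    obtain ⟨μ, h1, h2⟩ := H (-t) (by simpa using ht) (by linarith)
    refine ⟨-μ, by simpa using h1, ?_⟩
    rw [inv_neg]; linarith
  · rw [abs_of_pos h] at ht
    have hs : 0 ≤ t ^ 2 - 4 := by nlinarith
    set s := Real.sqrt (t ^ 2 - 4) with hsd
    have hs0 : 0 ≤ s := Real.sqrt_nonneg _
    have hss : s ^ 2 = t ^ 2 - 4 := Real.sq_sqrt hs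
    have hpos : 1 < (t + s) / 2 := by linarith
    refine ⟨(t + s) / 2, by rwa [abs_of_pos (by linarith)], ?_⟩
    have : t + s ≠ 0 := by linarith
    field_simp
    nlinarith

lemma decomp (T : Matrix (Fin 2) (Fin 2) ℝ) (hd : T.det = 1) (μ : ℝ) (hμ : 1 < |μ|)
    (ht : μ + μ⁻¹ = T.trace) :
    ∃ P Q : Matrix (Fin 2) (Fin 2) ℝ, P.trace = 1 ∧ Q.trace = 1 ∧
      ∀ k : ℕ, T ^ k = μ ^ k • P + (μ⁻¹) ^ k • Q := by
  have hμ0 : μ ≠ 0 := by rintro rfl; simp at hμ; linarith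
  have hD : μ - μ⁻¹ ≠ 0 := by
    intro h
    have h1 : μ * μ = 1 := by field_simp at h; nlinarith
    have h2 : |μ| * |μ| = 1 := by rw [← abs_mul, h1, abs_one]
    nlinarith
  have hc := ch2 T hd
  have hi : μ * μ⁻¹ = 1 := mul_inv_cancel₀ hμ0
  have hTP : T * (T - μ⁻¹ • 1) = μ • (T - μ⁻¹ • (1 : Matrix (Fin 2) (Fin 2) ℝ)) := by
    rw [mul_sub, hc, ← ht, Matrix.mul_smul, mul_one, smul_sub, smul_smul, hi, add_smul]
    module
  have hTQ : T * (μ • 1 - T) = μ⁻¹ • (μ • (1 : Matrix (Fin 2) (Fin 2) ℝ) - T) := by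
    rw [mul_sub, hc, ← ht, Matrix.mul_smul, mul_one, smul_sub, smul_smul, mul_comm μ⁻¹, hi, add_smul]
    module
  refine ⟨(μ - μ⁻¹)⁻¹ • (T - μ⁻¹ • 1), (μ - μ⁻¹)⁻¹ • (μ • 1 - T), ?_, ?_, ?_⟩
  · simp [Matrix.trace_smul, Matrix.trace_sub, ← ht]
    rw [inv_mul_eq_one₀ hD]; ring
  · simp [Matrix.trace_smul, Matrix.trace_sub, ← ht]
    rw [inv_mul_eq_one₀ hD]; ring
  · intro k
    induction k with
    | zero =>
      rw [pow_zero, pow_zero, pow_zero, one_smul, one_smul, ← smul_add]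
      have : T - μ⁻¹ • (1 : Matrix (Fin 2) (Fin 2) ℝ) + (μ • 1 - T) = (μ - μ⁻¹) • 1 := by module
      rw [this, smul_smul, inv_mul_cancel₀ hD, one_smul]
    | succ k ih =>
      rw [pow_succ', ih, mul_add, Matrix.mul_smul, Matrix.mul_smul, Matrix.mul_smul,
        Matrix.mul_smul, hTP, hTQ, pow_succ, pow_succ]
      module

open scoped Matrix.Norms.L2Operator in
lemma opNorm_eq (A : Matrix (Fin 2) (Fin 2) ℝ) : opNorm A = ‖A‖ := rfl

lemma opNorm_mul (A B : Matrix (Fin 2) (Fin 2) ℝ) : opNorm (A * B) ≤ opNorm A * opNorm B := by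
  simp only [opNorm_eq]; exact Matrix.l2_opNorm_mul A B

lemma opNorm_nonneg (A : Matrix (Fin 2) (Fin 2) ℝ) : 0 ≤ opNorm A := norm_nonneg _

open scoped Matrix.Norms.L2Operator in
lemma opNorm_add_smul (a b : ℝ) (A B : Matrix (Fin 2) (Fin 2) ℝ) :
    opNorm (a • A + b • B) ≤ |a| * opNorm A + |b| * opNorm B := by
  simp only [opNorm_eq]
  refine (norm_add_le _ _).trans ?_
  rw [norm_smul, norm_smul, Real.norm_eq_abs, Real.norm_eq_abs]

open scoped Matrix.Norms.L2Operator in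
lemma trace_le : ∃ K : ℝ, 0 < K ∧ ∀ A : Matrix (Fin 2) (Fin 2) ℝ, |A.trace| ≤ K * opNorm A := by
  let f := LinearMap.toContinuousLinearMap (Matrix.traceLinearMap (Fin 2) ℝ ℝ)
  refine ⟨‖f‖ + 1, by positivity, fun A => ?_⟩
  have := f.le_opNorm A
  have h2 : f A = A.trace := rfl
  rw [h2, Real.norm_eq_abs, ← opNorm_eq] at this
  have := opNorm_nonneg A
  nlinarith

/-- `μ^k + μ^{-k}` is at least `|μ|^k` in absolute value. -/
lemma abs_pow_le (μ : ℝ) (hμ : μ ≠ 0) (k : ℕ) : |μ| ^ k ≤ |μ ^ k + μ⁻¹ ^ k| := by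
  have h0 : μ ^ k ≠ 0 := pow_ne_zero _ hμ
  have hi : 0 < μ ^ k * μ⁻¹ ^ k := by rw [inv_pow, mul_inv_cancel₀ h0]; norm_num
  rw [← abs_pow]
  apply sq_le_sq.mp
  nlinarith [sq_nonneg (μ⁻¹ ^ k)]

lemma lyap_per (W : ℤ → ℝ) (q : ℕ) (hq : 1 ≤ q) (hW : IsPeriodic W q) (E μ : ℝ)
    (hμ : 1 < |μ|) (ht : μ + μ⁻¹ = (transferMatrix W E q).trace) :
    lyapExp W E = Real.log |μ| / q := by
  set T := transferMatrix W E q with hT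
  have hμ0 : μ ≠ 0 := by rintro rfl; simp at hμ; linarith
  obtain ⟨P, Q, hP, hQ, hk⟩ := decomp T (tm_det _ _ _) μ hμ ht
  obtain ⟨K, hK, hKt⟩ := trace_le
  set L := Real.log |μ| with hL
  have hL0 : 0 < L := Real.log_pos hμ
  -- uniform bounds for r<q
  obtain ⟨D, hD⟩ : ∃ D : ℝ, ∀ r < q, opNorm (transferMatrix W E r) ≤ D ∧
      opNorm (transferMatrix W E r)⁻¹ ≤ D := by
    refine ⟨∑ r ∈ Finset.range q, (opNorm (transferMatrix W E r) +
      opNorm (transferMatrix W E r)⁻¹), fun r hr => ?_⟩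
    have := Finset.single_le_sum (f := fun r => opNorm (transferMatrix W E r) +
      opNorm (transferMatrix W E r)⁻¹) (s := Finset.range q)
      (fun i _ => add_nonneg (opNorm_nonneg _) (opNorm_nonneg _)) (Finset.mem_range.mpr hr)
    have h1 := opNorm_nonneg (transferMatrix W E r)
    have h2 := opNorm_nonneg (transferMatrix W E r)⁻¹
    constructor <;> linarith
  set D' := max D 1 with hD'
  have hD1 : 1 ≤ D' := le_max_right _ _
  set C := opNorm P + opNorm Q + 1 with hC
  have hC1 : 1 ≤ C := by have := opNorm_nonneg P; have := opNorm_nonneg Q; linarith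
  have key : ∀ N : ℕ, |Real.log (opNorm (transferMatrix W E N)) - (N / q : ℕ) * L| ≤
      |Real.log (D' * C)| + |Real.log (K * D')| := by
    intro N
    have hr := Nat.mod_lt N (show q > 0 by omega)
    set k := N / q
    set r := N % q
    have hN : transferMatrix W E N = transferMatrix W E r * T ^ k := by
      rw [← tm_per hW]; congr 1; rw [mul_comm]; exact (Nat.div_add_mod N q).symm
    have hTk : T ^ k = (transferMatrix W E r)⁻¹ * transferMatrix W E N := by
      rw [hN, Matrix.nonsing_inv_mul_cancel_left]; rw [tm_det]; exact isUnit_one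
    have hμk : 0 < |μ| ^ k := by positivity
    have up : opNorm (transferMatrix W E N) ≤ D' * C * |μ| ^ k := by
      rw [hN]
      refine (opNorm_mul _ _).trans ?_
      rw [mul_assoc]
      refine mul_le_mul ((hD r hr).1.trans (le_max_left _ _)) ?_ (opNorm_nonneg _) (by linarith)
      rw [hk]
      refine (opNorm_add_smul _ _ _ _).trans ?_
      have h1 : |μ⁻¹ ^ k| ≤ |μ| ^ k := by
        rw [abs_pow, abs_inv]
        exact pow_le_pow_left₀ (by positivity) ((inv_le_one_of_one_le₀ hμ.le).trans hμ.le) _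
      rw [abs_pow]
      have := opNorm_nonneg P; have := opNorm_nonneg Q
      nlinarith
    have lo : |μ| ^ k ≤ K * D' * opNorm (transferMatrix W E N) := by
      have h1 : (T ^ k).trace = μ ^ k + μ⁻¹ ^ k := by
        rw [hk, Matrix.trace_add, Matrix.trace_smul, Matrix.trace_smul, hP, hQ]; simp
      refine (abs_pow_le μ hμ0 k).trans ?_
      rw [← h1]
      refine (hKt _).trans ?_
      rw [mul_assoc]
      refine mul_le_mul_of_nonneg_left ?_ hK.le
      rw [hTk]
      refine (opNorm_mul _ _).trans ?_
      exact mul_le_mul_of_nonneg_right ((hD r hr).2.trans (le_max_left _ _)) (opNorm_nonneg _)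
    have hpos : 0 < opNorm (transferMatrix W E N) := by
      have hKD : 0 < K * D' := by positivity
      by_contra hcon
      have : opNorm (transferMatrix W E N) = 0 := le_antisymm (not_lt.mp hcon) (opNorm_nonneg _)
      rw [this] at lo; linarith
    have hup := Real.log_le_log hpos up
    have hlo := Real.log_le_log hμk lo
    rw [Real.log_mul (by positivity) (by positivity), Real.log_pow] at hup
    rw [Real.log_mul (by positivity) (by positivity), Real.log_pow] at hlo
    have a1 := le_abs_self (Real.log (D' * C))
    have a2 := le_abs_self (Real.log (K * D'))
    have a3 := abs_nonneg (Real.log (D' * C))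
    have a4 := abs_nonneg (Real.log (K * D'))
    rw [abs_le]
    constructor <;> linarith
  set C0 := |Real.log (D' * C)| + |Real.log (K * D')| with hC0
  have hqpos : (0 : ℝ) < q := by exact_mod_cast hq
  have key2 : ∀ N : ℕ, |Real.log (opNorm (transferMatrix W E N)) - N * (L / q)| ≤ C0 + L := by
    intro N
    have h1 := key N
    have h2 : |((N / q : ℕ) : ℝ) * L - N * (L / q)| ≤ L := by
      have e : (N : ℝ) = q * (N / q : ℕ) + (N % q : ℕ) := by exact_mod_cast (Nat.div_add_mod N q).symm
      have hm : ((N % q : ℕ) : ℝ) ≤ q := by exact_mod_cast (Nat.mod_lt N (by omega)).le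
      have hm0 : (0 : ℝ) ≤ ((N % q : ℕ) : ℝ) := by positivity
      have : ((N / q : ℕ) : ℝ) * L - N * (L / q) = - (((N % q : ℕ) : ℝ) / q * L) := by
        rw [e]; field_simp; simp
      rw [this, abs_neg, abs_of_nonneg (by positivity)]
      have : ((N % q : ℕ) : ℝ) / q ≤ 1 := by rw [div_le_one hqpos]; exact hm
      nlinarith
    have := abs_sub_le (Real.log (opNorm (transferMatrix W E N))) (((N / q : ℕ) : ℝ) * L) (N * (L / q))
    linarith
  unfold lyapExp
  apply Tendsto.limsup_eq
  rw [tendsto_iff_norm_sub_tendsto_zero]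
  refine squeeze_zero' (g := fun N : ℕ => (C0 + L) / (N : ℝ)) (.of_forall fun _ => norm_nonneg _) ?_
    (tendsto_const_div_atTop_nhds_zero_nat _)
  filter_upwards [eventually_ge_atTop 1] with N hN
  have hNp : (0 : ℝ) < N := by exact_mod_cast hN
  rw [Real.norm_eq_abs, le_div_iff₀ hNp]
  calc |logNormRate W E N - L / q| * N
      = |logNormRate W E N - L / q| * |(N : ℝ)| := by rw [abs_of_pos hNp]
    _ = |(logNormRate W E N - L / q) * N| := (abs_mul _ _).symm
    _ = |Real.log (opNorm (transferMatrix W E N)) - N * (L / q)| := by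
        congr 1; unfold logNormRate; field_simp
    _ ≤ _ := key2 N

lemma rec_zero (x : ℕ → ℝ) (t : ℝ) (ht : |t| ≤ 2) (hx : ∀ k, x (k + 2) = t * x (k + 1) - x k)
    (h0 : Tendsto x atTop (nhds 0)) : x 0 = 0 := by
  obtain ⟨z, z', h1, h2, h3, h4⟩ : ∃ z z' : ℂ, z + z' = t ∧ z * z' = 1 ∧ ‖z‖ = 1 ∧ ‖z'‖ = 1 := by
    have hs : 0 ≤ 1 - t ^ 2 / 4 := by
      have := (sq_le_sq₀ (abs_nonneg t) (by norm_num)).mpr ht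
      rw [sq_abs] at this; linarith
    have hss := Real.sq_sqrt hs
    set s := Real.sqrt (1 - t ^ 2 / 4)
    have hn : ‖(⟨t / 2, s⟩ : ℂ)‖ = 1 := by
      rw [Complex.norm_eq_sqrt_sq_add_sq, Real.sqrt_eq_one]
      simp only; rw [hss]; ring
    refine ⟨⟨t / 2, s⟩, (starRingEnd ℂ) ⟨t / 2, s⟩, ?_, ?_, hn, ?_⟩
    · apply Complex.ext <;> simp
    · rw [Complex.mul_conj, Complex.normSq_eq_norm_sq, hn]; simp
    · rw [RCLike.norm_conj, hn]
  have h0c : Tendsto (fun k => (x k : ℂ)) atTop (nhds 0) := by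
    have := (Complex.continuous_ofReal.tendsto 0).comp h0
    simpa [Function.comp_def] using this
  set y : ℕ → ℂ := fun k => (x (k + 1) : ℂ) - z * x k with hy
  have hy1 : ∀ k, y (k + 1) = z' * y k := by
    intro k
    simp only [hy]
    have : (x (k + 1 + 1) : ℂ) = (z + z') * x (k + 1) - x k := by
      rw [h1]; exact_mod_cast hx k
    rw [this]
    linear_combination (x k : ℂ) * h2
  have hynorm : ∀ k, ‖y k‖ = ‖y 0‖ := by
    intro k
    induction k with
    | zero => rfl
    | succ k ih => rw [hy1, norm_mul, h4, one_mul, ih]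
  have hyt : Tendsto y atTop (nhds 0) := by
    have := (h0c.comp (tendsto_add_atTop_nat 1)).sub (h0c.const_mul z)
    simpa [Function.comp_def, hy] using this
  have hy0 : ∀ k, y k = 0 := by
    have h5 : Tendsto (fun k => ‖y k‖) atTop (nhds 0) := by simpa using hyt.norm
    simp only [hynorm] at h5
    have := tendsto_nhds_unique h5 tendsto_const_nhds
    intro k
    rw [← norm_eq_zero, hynorm, this]
  have hxn : ∀ k, ‖(x k : ℂ)‖ = ‖(x 0 : ℂ)‖ := by
    intro k
    induction k with
    | zero => rfl
    | succ k ih =>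
      have := hy0 k
      simp only [hy, sub_eq_zero] at this
      rw [this, norm_mul, h3, one_mul, ih]
  have h5 : Tendsto (fun k => ‖(x k : ℂ)‖) atTop (nhds 0) := by simpa using h0c.norm
  simp only [hxn] at h5
  have := tendsto_nhds_unique h5 tendsto_const_nhds
  have h6 : (x 0 : ℂ) = 0 := norm_eq_zero.mp this.symm
  exact_mod_cast h6

lemma trace_gt (p : ℕ) (hp : 1 ≤ p) (V : ℤ → ℝ) (hper : IsPeriodic V p)
    (H : lp (fun _ : ℤ => ℂ) 2 →L[ℂ] lp (fun _ : ℤ => ℂ) 2)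
    (hH : IsSchrodingerOp V H) (E : ℝ) (hE : (E : ℂ) ∉ spectrum ℂ H) :
    2 < |(transferMatrix V E p).trace| := by
  by_contra hcon
  push Not at hcon
  set M := transferMatrix V E p with hM
  set t := M.trace with ht
  have hMM : M * M = t • M - 1 := ch2 M (tm_det _ _ _)
  rw [spectrum.notMem_iff] at hE
  obtain ⟨U, hU⟩ := hE
  set φ := (U⁻¹ : _ˣ).val (lp.single 2 (-1 : ℤ) (1 : ℂ)) with hφ
  have hφ1 : (algebraMap ℂ (lp (fun _ : ℤ => ℂ) 2 →L[ℂ] lp (fun _ : ℤ => ℂ) 2) E - H) φ =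
      lp.single 2 (-1 : ℤ) (1 : ℂ) := by
    rw [← hU, hφ, ← mul_apply_eq_comp, Units.mul_inv]; rfl
  have hφ2 : ∀ n : ℤ, (E : ℂ) * φ n - (φ (n + 1) + φ (n - 1) + (V n : ℂ) * φ n) =
      if n = -1 then 1 else 0 := by
    intro n
    have h := congrArg (fun f : lp (fun _ : ℤ => ℂ) 2 => f n) hφ1
    simp only [_root_.sub_apply] at h
    have e1 : (algebraMap ℂ (lp (fun _ : ℤ => ℂ) 2 →L[ℂ] lp (fun _ : ℤ => ℂ) 2) E) φ =
      (E : ℂ) • φ := rfl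
    rw [e1, lp.coeFn_sub, Pi.sub_apply, hH φ n, lp.coeFn_smul, Pi.smul_apply, smul_eq_mul] at h
    rw [h, lp.single_apply]
    by_cases hn : n = -1
    · subst hn; simp
    · simp [hn]
  set u : ℤ → ℝ := fun n => (φ n).re with hu
  have hrec : ∀ n : ℤ, E * u n - (u (n + 1) + u (n - 1) + V n * u n) =
      if n = -1 then 1 else 0 := by
    intro n
    have h := congrArg Complex.re (hφ2 n)
    simp only [Complex.sub_re, Complex.add_re, Complex.re_ofReal_mul] at h
    simp only [hu]
    rw [h]
    split_ifs <;> simp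
  have hlim : Tendsto u cofinite (nhds 0) := by
    have h1 := (Memℓp.summable (p := 2) (by norm_num) (lp.memℓp φ)).tendsto_cofinite_zero
    have h2 : Tendsto (fun n => ‖φ n‖) cofinite (nhds 0) := by
      have h3 := (Real.continuous_sqrt.tendsto 0).comp h1
      rw [Real.sqrt_zero] at h3
      refine h3.congr fun n => ?_
      simp
    exact squeeze_zero_norm (fun n => Complex.abs_re_le_norm _) h2
  set w : ℤ → Fin 2 → ℝ := fun n => ![u n, u (n - 1)] with hw
  have hstep : ∀ n : ℤ, n ≠ -1 → w (n + 1) = stepM V E n *ᵥ w n := by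
    intro n hn
    have h := hrec n
    rw [if_neg hn] at h
    simp only [hw, stepM]
    ext i
    fin_cases i
    · simp [Matrix.mulVec, dotProduct, Fin.sum_univ_two]; linarith
    · simp [Matrix.mulVec, dotProduct, Fin.sum_univ_two]
  have hperZ : ∀ (j n : ℤ), V (n + j * p) = V n := by
    intro j n
    have : Function.Periodic V (p : ℤ) := hper
    simpa using this.int_mul j n
  have hmono : ∀ (j : ℤ) (r : ℕ), (∀ s : ℕ, s < r → j * p + s ≠ -1) →
      w (j * p + r) = transferMatrix V E r *ᵥ w (j * p) := by
    intro j r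
    induction r with
    | zero => intro _; simp [tm_zero]
    | succ r ih =>
      intro hs
      have h1 := ih (fun s hs' => hs s (by omega))
      have h2 := hstep (j * p + r) (hs r (by omega))
      have h3 : stepM V E (j * p + r) = stepM V E r := by
        simp only [stepM]; rw [add_comm, hperZ]
      rw [tm_succ, ← Matrix.mulVec_mulVec, ← h1, ← h3, ← h2]
      congr 1; push_cast; ring
  have hM2 : ∀ v : Fin 2 → ℝ, M *ᵥ (M *ᵥ v) = t • (M *ᵥ v) - v := by
    intro v
    rw [Matrix.mulVec_mulVec, hMM, Matrix.sub_mulVec, Matrix.smul_mulVec, Matrix.one_mulVec]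
  have hwlim : ∀ (f : ℕ → ℤ), Function.Injective f → ∀ i,
      Tendsto (fun k => w (f k) i) atTop (nhds 0) := by
    intro f hf i
    rw [← Nat.cofinite_eq_atTop]
    fin_cases i
    · exact hlim.comp hf.tendsto_cofinite
    · have : Function.Injective (fun k => f k - 1) := fun a b hab => hf (by simpa using hab)
      exact hlim.comp this.tendsto_cofinite
  have hp0 : (0 : ℤ) < p := by exact_mod_cast hp
  -- right half-line
  have hR : w 0 = 0 := by
    have hs : ∀ k : ℕ, w (((k + 1 : ℕ) : ℤ) * p) = M *ᵥ w ((k : ℤ) * p) := by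
      intro k
      rw [hM, ← hmono k p]
      · congr 1; push_cast; ring
      · intro s _; have : (0 : ℤ) ≤ (k : ℤ) * p := by positivity
        omega
    ext i
    have := rec_zero (fun k => w ((k : ℤ) * p) i) t hcon ?_ ?_
    · simpa using this
    · intro k
      rw [hs (k + 1), hs k, hM2]; rfl
    · refine hwlim (fun k => (k : ℤ) * p) ?_ i
      intro a b hab
      have := mul_right_cancel₀ hp0.ne' hab
      omega
  have hL : w (-p) = 0 := by
    have hs : ∀ k : ℕ, w (-((k : ℤ) + 1) * p) = M *ᵥ w (-(((k + 1 : ℕ) : ℤ) + 1) * p) := by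
      intro k
      rw [hM, ← hmono _ p]
      · congr 1; push_cast; ring
      · intro s hs
        have : (s : ℤ) < p := by exact_mod_cast hs
        push_cast
        nlinarith [mul_nonneg (Int.natCast_nonneg k) hp0.le]
    ext i
    have := rec_zero (fun k => w (-((k : ℤ) + 1) * p) i) t hcon ?_ ?_
    · simpa using this
    · intro k
      change w (-(((k + 1 + 1 : ℕ) : ℤ) + 1) * p) i = _
      rw [hs k, hs (k + 1), hM2]
      simp only [Pi.sub_apply, Pi.smul_apply, smul_eq_mul]
      ring
    · refine hwlim (fun k => -((k : ℤ) + 1) * p) ?_ i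
      intro a b hab
      have := mul_right_cancel₀ hp0.ne' hab
      omega
  have hL1 : w (-1) = 0 := by
    have h := hmono (-1) (p - 1) (by intro s hs; omega)
    have e1 : (-1 : ℤ) * p + (p - 1 : ℕ) = -1 := by omega
    have e2 : (-1 : ℤ) * p = -p := by ring
    rw [e1, e2, hL, Matrix.mulVec_zero] at h
    exact h
  have a0 : u 0 = 0 := congrFun hR 0
  have a1 : u (-1) = 0 := congrFun hL1 0
  have a2 : u (-1 - 1) = 0 := congrFun hL1 1
  have h := hrec (-1)
  rw [a1, a2] at h
  norm_num [a0] at h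

lemma tm_hat (p : ℕ) (hp : 1 ≤ p) (V : ℤ → ℝ) (hper : IsPeriodic V p) (E c : ℝ) (m h : ℕ)
    (W : ℤ → ℝ) (hW : ∀ n : ℤ,
      W n = if n % (((m + h) * p : ℕ) : ℤ) < ((m * p : ℕ) : ℤ) then V n else V n - c)
    (hh : 1 ≤ h) :
    transferMatrix W E ((m + h) * p) =
      transferMatrix (fun n => V n - c) E p ^ h * transferMatrix V E p ^ m := by
  have hper' : IsPeriodic (fun n => V n - c) p := fun n => by simp only [hper n]
  have h1 := tm_per hper E m 0
  have h2 := tm_per hper' E h 0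
  rw [tm_zero, one_mul, add_zero] at h1 h2
  have hhp : 0 < h * p := by positivity
  rw [add_mul, tm_add, ← h1, ← h2]
  congr 1
  · apply tm_congr
    intro n hn
    have e : ((n : ℤ) + (m * p : ℕ)) % (((m + h) * p : ℕ) : ℤ) = (n : ℤ) + (m * p : ℕ) := by
      apply Int.emod_eq_of_lt (by positivity)
      rw [add_mul]; push_cast; zify at hn; linarith
    rw [hW, e, if_neg (by omega), per_mul hper]
  · apply tm_congr
    intro n hn
    have e : (n : ℤ) % (((m + h) * p : ℕ) : ℤ) = (n : ℤ) := by
      apply Int.emod_eq_of_lt (by positivity)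
      rw [add_mul]; omega
    rw [hW, e, if_pos (by exact_mod_cast hn)]

lemma core (p : ℕ) (hp : 1 ≤ p) (V : ℤ → ℝ) (hper : IsPeriodic V p) (E c lam b d : ℝ) (h : ℕ)
    (hh : 1 ≤ h) (hlam : 1 < |lam|) (hb : b ≠ 0)
    (Vh : ℕ → ℤ → ℝ)
    (hV : ∀ m : ℕ, 1 ≤ m → ∀ n : ℤ, Vh m n =
      if n % (((m + h) * p : ℕ) : ℤ) < ((m * p : ℕ) : ℤ) then V n else V n - c)
    (htr : ∀ m : ℕ, (transferMatrix (fun n => V n - c) E p ^ h * transferMatrix V E p ^ m).trace =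
      lam ^ m * b + lam⁻¹ ^ m * d) :
    Tendsto (fun m : ℕ => lyapExp (Vh m) E) atTop (nhds (Real.log |lam| / p)) := by
  set L := Real.log |lam| with hL
  have hL0 : 0 < L := Real.log_pos hlam
  have hpp : (1 : ℝ) ≤ p := by exact_mod_cast hp
  have hbp : 0 < |b| := abs_pos.mpr hb
  set C := |Real.log (|b| / 4)| + |Real.log (3 * |b| / 2)| with hC
  rw [tendsto_iff_norm_sub_tendsto_zero]
  refine squeeze_zero' (g := fun m : ℕ => (C + h * L) / (m : ℝ)) (.of_forall fun _ => norm_nonneg _) ?_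
    (tendsto_const_div_atTop_nhds_zero_nat _)
  have hinf : Tendsto (fun m : ℕ => |b| / 2 * |lam| ^ m) atTop atTop :=
    (tendsto_pow_atTop_atTop_of_one_lt hlam).const_mul_atTop (by positivity)
  filter_upwards [eventually_ge_atTop 1, hinf.eventually_ge_atTop |d|, hinf.eventually_gt_atTop 2]
    with m hm hd h2
  have hlm : 0 < |lam| ^ m := by positivity
  have htm := tm_hat p hp V hper E c m h (Vh m) (hV m hm) hh
  have hpv : IsPeriodic (Vh m) ((m + h) * p) := by
    intro n
    rw [hV m hm, hV m hm, per_mul hper, Int.add_emod_right]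
  have ht : (transferMatrix (Vh m) E ((m + h) * p)).trace = lam ^ m * b + lam⁻¹ ^ m * d := by
    rw [htm, htr]
  set t := lam ^ m * b + lam⁻¹ ^ m * d with htd
  have hsmall : |lam⁻¹ ^ m * d| ≤ |b| / 2 * |lam| ^ m := by
    rw [abs_mul, abs_pow, abs_inv]
    have : |lam|⁻¹ ^ m ≤ 1 := pow_le_one₀ (by positivity) (inv_le_one_of_one_le₀ hlam.le)
    have := abs_nonneg d
    nlinarith
  have hbig : |lam ^ m * b| = |b| * |lam| ^ m := by rw [abs_mul, abs_pow, mul_comm]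
  have hlo : |b| / 2 * |lam| ^ m ≤ |t| := by
    have := abs_sub_abs_le_abs_add (lam ^ m * b) (lam⁻¹ ^ m * d)
    rw [hbig] at this; linarith
  have hup : |t| ≤ 3 * |b| / 2 * |lam| ^ m := by
    have := abs_add_le (lam ^ m * b) (lam⁻¹ ^ m * d)
    rw [hbig] at this; linarith
  obtain ⟨μ, hμ, hμt⟩ := exists_mu t (by linarith)
  have hμ0 : μ ≠ 0 := by rintro rfl; simp at hμ; linarith
  have hqpos : 1 ≤ (m + h) * p := Nat.mul_pos (by omega) (by omega)
  rw [lyap_per (Vh m) ((m + h) * p) hqpos hpv E μ hμ (by rw [hμt, ht])]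
  have h3 : |μ| ≤ |t| := by
    have := abs_pow_le μ hμ0 1
    simp only [pow_one] at this; rwa [hμt] at this
  have h4 : |t| ≤ 2 * |μ| := by
    rw [← hμt]
    have h5 := abs_add_le μ μ⁻¹
    have h6 : |μ⁻¹| ≤ 1 := by rw [abs_inv]; exact inv_le_one_of_one_le₀ hμ.le
    linarith
  have l1 := Real.log_le_log (by linarith) (h3.trans hup)
  have l2 := Real.log_le_log (by positivity) (show |b| / 4 * |lam| ^ m ≤ |μ| by linarith)
  rw [Real.log_mul (by positivity) (by positivity), Real.log_pow] at l1 l2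
  have hab : |Real.log |μ| - m * L| ≤ C := by
    have a1 := neg_abs_le (Real.log (|b| / 4))
    have a2 := le_abs_self (Real.log (3 * |b| / 2))
    have a3 := abs_nonneg (Real.log (|b| / 4))
    have a4 := abs_nonneg (Real.log (3 * |b| / 2))
    rw [abs_le]; constructor <;> linarith
  have hmp : (0 : ℝ) < m := by exact_mod_cast hm
  have hhp : (0 : ℝ) < h := by exact_mod_cast hh
  have e : Real.log |μ| / (((m + h) * p : ℕ) : ℝ) - L / p =
      (Real.log |μ| - m * L - h * L) / ((m + h) * p) := by
    push_cast; field_simp; ring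
  rw [e, Real.norm_eq_abs, abs_div, abs_of_pos (show (0 : ℝ) < (m + h) * p by positivity)]
  have hnum : |Real.log |μ| - m * L - h * L| ≤ C + h * L := by
    have := abs_sub (Real.log |μ| - m * L) (h * L)
    rw [abs_of_pos (show 0 < h * L by positivity)] at this
    linarith
  have hC0 : 0 ≤ C := by positivity
  refine div_le_div₀ (by positivity) hnum hmp ?_
  nlinarith

end Helpers

/-- for `E` outside the spectrum there is `h ∈ {1,2}` so that the
Lyapunov exponent of the modified periodic potentials `V̂_{m,h}` converges to that
of `V` as `m → ∞`. -/
theorem statement11 (ptil : ℕ) (hptil : 1 ≤ ptil) (V : ℤ → ℝ)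
    (hper : IsPeriodic V ptil)
    (H : lp (fun _ : ℤ => ℂ) 2 →L[ℂ] lp (fun _ : ℤ => ℂ) 2)
    (hH : IsSchrodingerOp V H) (E : ℝ) (hE : (E : ℂ) ∉ spectrum ℂ H) (c : ℝ)
    (Vhat : ℕ → ℕ → ℤ → ℝ)
    (hVhat : ∀ m h : ℕ, 1 ≤ m → 1 ≤ h → ∀ n : ℤ,
      Vhat m h n =
        if n % (((m + h) * ptil : ℕ) : ℤ) < ((m * ptil : ℕ) : ℤ)
        then V n else V n - c) :
    ∃ h ∈ ({1, 2} : Set ℕ),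
      Filter.Tendsto (fun m : ℕ => lyapExp (Vhat m h) E) Filter.atTop
        (nhds (lyapExp V E)) := by
  have htr := trace_gt ptil hptil V hper H hH E hE
  obtain ⟨lam, hlam, hlt⟩ := exists_mu _ htr
  obtain ⟨P, Q, hP, hQ, hk⟩ := decomp _ (tm_det V E ptil) lam hlam hlt
  rw [lyap_per V ptil hptil hper E lam hlam hlt]
  have fin : ∀ h : ℕ, 1 ≤ h → (transferMatrix (fun n => V n - c) E ptil ^ h * P).trace ≠ 0 →
      Filter.Tendsto (fun m : ℕ => lyapExp (Vhat m h) E) Filter.atTop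
        (nhds (Real.log |lam| / ptil)) := by
    intro h hh hb
    refine core ptil hptil V hper E c lam _
      (transferMatrix (fun n => V n - c) E ptil ^ h * Q).trace h hh hlam hb (fun m => Vhat m h)
      (fun m hm => hVhat m h hm hh) ?_
    intro m
    rw [hk, Matrix.mul_add, Matrix.mul_smul, Matrix.mul_smul, Matrix.trace_add,
      Matrix.trace_smul, Matrix.trace_smul, smul_eq_mul, smul_eq_mul]
  by_cases hb : (transferMatrix (fun n => V n - c) E ptil ^ 1 * P).trace = 0
  · refine ⟨2, by simp, fin 2 (by norm_num) ?_⟩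
    rw [pow_one] at hb
    rw [pow_two, ch2 _ (tm_det _ _ _), Matrix.sub_mul, Matrix.smul_mul, Matrix.one_mul,
      Matrix.trace_sub, Matrix.trace_smul, hb, hP]
    simp
  · exact ⟨1, by simp, fin 1 le_rfl hb⟩
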